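/- Let π be a b-ordering of G consistent with a segment assignment φ (relative to a rooted spanning tree D of G). For each 0 ≤ k ≤ n, let s_k be the partial function defined exactly on the set of vertices occupying the first k positions in the color order, with s_k(v) = Θ_{segment(π(v))}. Then every s_k is a state, and for every 0 ≤ k < n the state s_{k+1} is an extension of s_k. -/

import Mathlib

/-- `segm b i = ⌈i/(b+1)⌉`, the base-segment number of position `i`. -/
def segm (b i : ℕ) : ℕ := (i + b) / (b + 1)

/-- `color b i = ((i-1) mod (b+1)) + 1`, the color of position `i`. -/
def color (b i : ℕ) : ℕ := (i - 1) % (b + 1) + 1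

/-- The segment `Θ_{(i,j)} = {i(b+1)+1, …, j(b+1)} ∩ {1,…,n}`. -/
def Seg (b n : ℕ) (i j : ℤ) : Set ℕ :=
  {p : ℕ | i * (b + 1) < (p : ℤ) ∧ (p : ℤ) ≤ j * (b + 1) ∧ 1 ≤ p ∧ p ≤ n}

/-- `q` strictly precedes `p` in the color order (lexicographic by (color, segment)). -/
def ColorLt (b q p : ℕ) : Prop :=
  color b q < color b p ∨ (color b q = color b p ∧ segm b q < segm b p)

instance (b q p : ℕ) : Decidable (ColorLt b q p) := by
  unfold ColorLt; infer_instance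

/-- The number of positions in `{1,…,n}` strictly preceding `p` in the color order;
the first `k` positions in the color order are those of rank `< k`. -/
def rank (b n p : ℕ) : ℕ := ((Finset.Icc 1 n).filter (fun q => ColorLt b q p)).card

/-- A rooted spanning tree of `G` with root `u0` and parent map `pa`. -/
def IsRootedSpanningTree {V : Type*} (G : SimpleGraph V) (u0 : V) (pa : V → V) : Prop :=
  pa u0 = u0 ∧ (∀ v, v ≠ u0 → G.Adj v (pa v)) ∧ ∀ v, ∃ m : ℕ, pa^[m] v = u0

/-- A vertex is a leaf of the rooted tree with parent map `pa` if it is not the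
parent of any vertex other than itself. -/
def IsLeaf {V : Type*} (pa : V → V) (v : V) : Prop := ∀ w, pa w = v → w = v

open Classical in
/-- The segment assigned by the segment assignment with start indices `φ`:
a leaf `v` gets `Θ_{(φ v, φ v + 4)}`, an inner vertex gets `Θ_{(φ v, φ v + 2)}`. -/
noncomputable def SegOf {V : Type*} (b n : ℕ) (pa : V → V) (φ : V → ℤ) (v : V) : Set ℕ :=
  if IsLeaf pa v then Seg b n (φ v) (φ v + 4) else Seg b n (φ v) (φ v + 2)

/-- A state for the segment assignment with start indices `φ` (relative to the tree
with parent map `pa`): a partial map `s` from vertices to base-segment indices such that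
(0) each assigned base segment `Θ_i` is contained in `φ v`;
(1) the vertices of `dom s` can be assigned to the first `|dom s|` positions in the
    color order compatibly with `s`;
(2) for every edge `uv`: if `s v = Θ_i` is defined and `s u` is undefined with
    `φ u = Θ_{(k,l)}` then `k ≤ i`, and if both `s u = Θ_k`, `s v = Θ_i` are defined
    then `|i − k| ≤ 1`. -/
def IsState {V : Type*} [Fintype V] (G : SimpleGraph V) (b n : ℕ) (pa : V → V)
    (φ : V → ℤ) (s : V → Option ℤ) : Prop :=
  (∀ v i, s v = some i → Seg b n i (i + 1) ⊆ SegOf b n pa φ v) ∧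
  (∃ g : V → ℕ, Set.BijOn g {v | (s v).isSome}
      {q : ℕ | 1 ≤ q ∧ q ≤ n ∧ rank b n q < {v | (s v).isSome}.ncard} ∧
      ∀ v i, s v = some i → g v ∈ Seg b n i (i + 1)) ∧
  (∀ u v i, G.Adj u v → s v = some i → s u = none → φ u ≤ i) ∧
  (∀ u v i k, G.Adj u v → s u = some k → s v = some i → |i - k| ≤ 1)

/-- `s'` extends `s` by defining one new vertex `v`; for every edge `uv`
with `s' u = Θ_k` defined and `s' v = Θ_i`, one has `k − 1 ≤ i ≤ k`. -/
def IsExtension {V : Type*} (G : SimpleGraph V) (s s' : V → Option ℤ) : Prop :=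
  ∃ v, s v = none ∧ (s' v).isSome ∧ (∀ w, w ≠ v → s' w = s w) ∧
    ∀ u k i, G.Adj u v → s' u = some k → s' v = some i → k - 1 ≤ i ∧ i ≤ k

/-!
The color order is the order induced by the injective map sending a position to its pair
(color, segment), so `rank` numbers the positions `1, …, n` by `0, …, n - 1` along it. Hence `π`
itself matches the domain of `s_k` with the first `k` positions, and `s_{k+1}` has one new vertex.

A position is determined by `segment · (b + 1) + color = position + (b + 1)`. Therefore passing to
a later segment without lowering the color moves by at least `b + 1`: an end of an edge that comes
first in the color order never lies in an earlier segment than the other end. As adjacent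
vertices also lie in the same or in consecutive segments, all edge conditions follow.
-/

open scoped Finset

section CountSmaller

variable {α β : Type*} [LinearOrder β] {s : Finset α} {f : α → β}

lemma card_filter_lt_lt_card_filter_lt_iff {x y : α} (hx : x ∈ s) :
    #{z ∈ s | f z < f x} < #{z ∈ s | f z < f y} ↔ f x < f y := by
  constructor
  · contrapose!
    exact fun hyx => Finset.card_le_card <|
      Finset.monotone_filter_right s fun _ _ hz => hz.trans_le hyx
  · intro hxy
    refine Finset.card_lt_card <| (Finset.ssubset_iff_of_subset ?_).2 ⟨x, ?_, ?_⟩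
    · exact Finset.monotone_filter_right s fun _ _ hz => hz.trans hxy
    · exact Finset.mem_filter.2 ⟨hx, hxy⟩
    · exact fun hmem => (Finset.mem_filter.1 hmem).2.false

lemma bijOn_card_filter_lt (hf : Set.InjOn f s) :
    Set.BijOn (fun x => #{z ∈ s | f z < f x}) s (Set.Iio #s) := by
  have hmaps : Set.MapsTo (fun x => #{z ∈ s | f z < f x}) s (Finset.range #s) := fun x hx =>
    Finset.mem_coe.2 <| Finset.mem_range.2 <| Finset.card_lt_card <|
      Finset.filter_ssubset.2 ⟨x, hx, lt_irrefl _⟩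
  have hinj : Set.InjOn (fun x => #{z ∈ s | f z < f x}) s := fun x hx y hy hxy =>
    hf hx hy <| le_antisymm
      (not_lt.1 fun h => ((card_filter_lt_lt_card_filter_lt_iff hy).2 h).ne' hxy)
      (not_lt.1 fun h => ((card_filter_lt_lt_card_filter_lt_iff hx).2 h).ne hxy)
  have hsurj := Finset.surjOn_of_injOn_of_card_le _ hmaps hinj (Finset.card_range _).le
  rw [Finset.coe_range] at hmaps hsurj
  exact ⟨hmaps, hinj, hsurj⟩

end CountSmaller

section Positions

variable {b n p q : ℕ} {i j : ℤ}

lemma segm_mul_add_color (hp : 1 ≤ p) : segm b p * (b + 1) + color b p = p + (b + 1) := by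
  obtain ⟨r, rfl⟩ := Nat.exists_eq_add_of_le' hp
  have hsegm : segm b (r + 1) = r / (b + 1) + 1 := by
    rw [segm, add_assoc, add_comm 1 b, Nat.add_div_right r b.succ_pos]
  have hcolor : color b (r + 1) = r % (b + 1) + 1 := rfl
  rw [hsegm, hcolor]
  linarith [Nat.div_add_mod' r (b + 1)]

lemma segm_le_iff : (segm b p : ℤ) ≤ j ↔ (p : ℤ) ≤ j * (b + 1) := by
  rw [segm, Int.natCast_ediv, ← Int.lt_add_one_iff]
  push_cast
  rw [Int.ediv_lt_iff_lt_mul (by positivity), add_one_mul]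
  omega

lemma mem_Seg_iff :
    p ∈ Seg b n i j ↔ i < segm b p ∧ (segm b p : ℤ) ≤ j ∧ p ∈ Set.Icc 1 n := by
  rw [segm_le_iff, ← not_le, segm_le_iff, not_le]
  rfl

lemma mem_Seg_segm (hp : p ∈ Set.Icc 1 n) : p ∈ Seg b n (segm b p - 1) (segm b p) :=
  mem_Seg_iff.2 ⟨sub_one_lt _, le_rfl, hp⟩

lemma Seg_segm_subset_Seg (hp : p ∈ Seg b n i j) :
    Seg b n (segm b p - 1) (segm b p) ⊆ Seg b n i j := by
  obtain ⟨hip, hpj, -⟩ := mem_Seg_iff.1 hp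
  intro q hq
  obtain ⟨hpq, hqp, hqn⟩ := mem_Seg_iff.1 hq
  exact mem_Seg_iff.2 ⟨by omega, hqp.trans hpj, hqn⟩

lemma segm_le_segm_add_one (h : p ≤ q + (b + 1)) : segm b p ≤ segm b q + 1 :=
  calc (p + b) / (b + 1) ≤ (q + b + (b + 1)) / (b + 1) := Nat.div_le_div_right (by omega)
    _ = (q + b) / (b + 1) + 1 := Nat.add_div_right _ b.succ_pos

lemma segm_le_segm_of_color_le (hp : 1 ≤ p) (hq : 1 ≤ q) (hpq : p ≤ q + b)
    (hcolor : color b q ≤ color b p) : segm b p ≤ segm b q := by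
  by_contra! hlt
  have hmul : (segm b q + 1) * (b + 1) ≤ segm b p * (b + 1) := Nat.mul_le_mul_right _ hlt
  linarith [segm_mul_add_color (b := b) hp, segm_mul_add_color (b := b) hq]

end Positions

section ColorOrder

variable {b n p q : ℕ}

/-- The pair (color, segment) of a position, in the lexicographic product: the color order on
positions is the order it induces. -/
def colorKey (b p : ℕ) : ℕ ×ₗ ℕ := toLex (color b p, segm b p)

lemma colorLt_iff_colorKey_lt : ColorLt b q p ↔ colorKey b q < colorKey b p := by
  rw [colorKey, colorKey, Prod.Lex.toLex_lt_toLex, ColorLt]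

lemma colorKey_injOn (b : ℕ) : Set.InjOn (colorKey b) (Set.Ici 1) := by
  intro p hp q hq hpq
  obtain ⟨hcolor, hsegm⟩ := Prod.mk.inj (toLex.injective hpq)
  have hp' := segm_mul_add_color (b := b) hp
  rw [hcolor, hsegm, segm_mul_add_color hq] at hp'
  exact (Nat.add_right_cancel hp').symm

lemma rank_eq_card_colorKey_lt (b n p : ℕ) :
    rank b n p = #{q ∈ Finset.Icc 1 n | colorKey b q < colorKey b p} := by
  simp only [rank, colorLt_iff_colorKey_lt]

lemma rank_lt_rank_iff (hp : p ∈ Set.Icc 1 n) :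
    rank b n p < rank b n q ↔ ColorLt b p q := by
  rw [rank_eq_card_colorKey_lt, rank_eq_card_colorKey_lt, colorLt_iff_colorKey_lt]
  exact card_filter_lt_lt_card_filter_lt_iff (Finset.mem_Icc.2 hp)

lemma rank_bijOn (b n : ℕ) : Set.BijOn (rank b n) (Set.Icc 1 n) (Set.Iio n) := by
  have hinj : Set.InjOn (colorKey b) (Finset.Icc 1 n) :=
    (colorKey_injOn b).mono fun p hp => (Finset.mem_Icc.1 hp).1
  simpa only [← rank_eq_card_colorKey_lt, Finset.coe_Icc, Nat.card_Icc, Nat.add_sub_cancel]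
    using bijOn_card_filter_lt hinj

lemma segm_le_segm_of_rank_lt_rank (hp : p ∈ Set.Icc 1 n) (hq : q ∈ Set.Icc 1 n)
    (hqp : q ≤ p + b) (hrank : rank b n p < rank b n q) : segm b q ≤ segm b p := by
  have hcolor : color b p ≤ color b q :=
    ((rank_lt_rank_iff hp).1 hrank).elim le_of_lt fun h => h.1.le
  exact segm_le_segm_of_color_le hq.1 hp.1 hqp hcolor

end ColorOrder

section PrefixState

variable {V : Type*} {G : SimpleGraph V} {b n k : ℕ} {π : V → ℕ} {v : V} {i : ℤ}

lemma exists_SegOf_eq_Seg (b n : ℕ) (pa : V → V) (φ : V → ℤ) (v : V) :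
    ∃ j, SegOf b n pa φ v = Seg b n (φ v) j := by
  unfold SegOf
  split_ifs <;> exact ⟨_, rfl⟩

/-- The partial map `s_k` of the ordering `π`: it is defined on the vertices occupying the first
`k` positions in the color order and sends each of them to the base segment of its position. Base
segments `Θ_i` are numbered from `i = 0`, segments of positions from `1`, hence the shift. -/
def prefixState (b n : ℕ) (π : V → ℕ) (k : ℕ) (v : V) : Option ℤ :=
  if rank b n (π v) < k then some ((segm b (π v) : ℤ) - 1) else none

lemma prefixState_eq_some_iff :
    prefixState b n π k v = some i ↔ rank b n (π v) < k ∧ (segm b (π v) : ℤ) - 1 = i := by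
  simp only [prefixState, Option.ite_none_right_eq_some, Option.some.injEq]

lemma prefixState_eq_none_iff : prefixState b n π k v = none ↔ k ≤ rank b n (π v) := by
  simp only [prefixState, ite_eq_right_iff, reduceCtorEq, imp_false, not_lt]

lemma isSome_prefixState_iff : (prefixState b n π k v).isSome ↔ rank b n (π v) < k := by
  rw [Option.isSome_iff_ne_none, ne_eq, prefixState_eq_none_iff, not_le]

lemma bijOn_isSome_prefixState (hbij : Set.BijOn π Set.univ (Set.Icc 1 n)) (k : ℕ) :
    Set.BijOn π {v | (prefixState b n π k v).isSome}
      {q | 1 ≤ q ∧ q ≤ n ∧ rank b n q < k} := by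
  have hdom : {v | (prefixState b n π k v).isSome} =
      Set.univ ∩ π ⁻¹' {q | 1 ≤ q ∧ q ≤ n ∧ rank b n q < k} := by
    ext v
    have hv := hbij.mapsTo (Set.mem_univ v)
    simp [isSome_prefixState_iff, hv.1, hv.2]
  rw [hdom]
  exact hbij.subset_right fun q hq => ⟨hq.1, hq.2.1⟩

lemma ncard_isSome_prefixState (hbij : Set.BijOn π Set.univ (Set.Icc 1 n)) (hk : k ≤ n) :
    {v | (prefixState b n π k v).isSome}.ncard = k := by
  have hrank := ((rank_bijOn b n).comp hbij).subset_right (Set.Iio_subset_Iio hk)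
  have hdom : {v | (prefixState b n π k v).isSome} =
      Set.univ ∩ (rank b n ∘ π) ⁻¹' Set.Iio k := by
    ext v
    simp [isSome_prefixState_iff]
  rw [hdom, hrank.ncard_eq, Set.ncard_Iio_nat]

lemma isState_prefixState [Fintype V] {pa : V → V} {φ : V → ℤ}
    (hbij : Set.BijOn π Set.univ (Set.Icc 1 n)) (hband : ∀ u v, G.Adj u v → π u ≤ π v + b)
    (hcons : ∀ v, π v ∈ SegOf b n pa φ v) (hk : k ≤ n) :
    IsState G b n pa φ (prefixState b n π k) := by
  have hpos : ∀ v, π v ∈ Set.Icc 1 n := fun v => hbij.mapsTo (Set.mem_univ v)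
  refine ⟨fun v i hv => ?_, ⟨π, ?_, fun v i hv => ?_⟩, fun u v i huv hv hu => ?_,
    fun u v i l huv hu hv => ?_⟩
  · obtain ⟨-, rfl⟩ := prefixState_eq_some_iff.1 hv
    obtain ⟨j, hj⟩ := exists_SegOf_eq_Seg b n pa φ v
    rw [sub_add_cancel, hj]
    exact Seg_segm_subset_Seg (hj ▸ hcons v)
  · rw [ncard_isSome_prefixState hbij hk]
    exact bijOn_isSome_prefixState hbij k
  · obtain ⟨-, rfl⟩ := prefixState_eq_some_iff.1 hv
    rw [sub_add_cancel]
    exact mem_Seg_segm (hpos v)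
  · obtain ⟨hvk, rfl⟩ := prefixState_eq_some_iff.1 hv
    obtain ⟨j, hj⟩ := exists_SegOf_eq_Seg b n pa φ u
    have hφ : φ u < segm b (π u) := (mem_Seg_iff.1 (hj ▸ hcons u)).1
    have hrank : rank b n (π v) < rank b n (π u) := hvk.trans_le (prefixState_eq_none_iff.1 hu)
    have hsegm := segm_le_segm_of_rank_lt_rank (hpos v) (hpos u) (hband u v huv) hrank
    omega
  · obtain ⟨-, rfl⟩ := prefixState_eq_some_iff.1 hu
    obtain ⟨-, rfl⟩ := prefixState_eq_some_iff.1 hv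
    have huv' := segm_le_segm_add_one (Nat.le_succ_of_le (hband u v huv))
    have hvu' := segm_le_segm_add_one (Nat.le_succ_of_le (hband v u huv.symm))
    rw [abs_le]
    omega

lemma isExtension_prefixState_succ (hbij : Set.BijOn π Set.univ (Set.Icc 1 n))
    (hband : ∀ u v, G.Adj u v → π u ≤ π v + b) (hk : k < n) :
    IsExtension G (prefixState b n π k) (prefixState b n π (k + 1)) := by
  have hpos : ∀ v, π v ∈ Set.Icc 1 n := fun v => hbij.mapsTo (Set.mem_univ v)
  have hrank : Set.BijOn (rank b n ∘ π) Set.univ (Set.Iio n) := (rank_bijOn b n).comp hbij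
  obtain ⟨v, -, hv : rank b n (π v) = k⟩ := hrank.surjOn hk
  have hne : ∀ w, w ≠ v → rank b n (π w) ≠ k := fun w hwv hw =>
    hwv (hrank.injOn (Set.mem_univ w) (Set.mem_univ v) (hw.trans hv.symm))
  refine ⟨v, prefixState_eq_none_iff.2 hv.ge, isSome_prefixState_iff.2 (by omega),
    fun w hw => ?_, fun u l i huv hu hv' => ?_⟩
  · have hiff : rank b n (π w) < k + 1 ↔ rank b n (π w) < k := by
      have := hne w hw
      omega
    simp only [prefixState, hiff]
  · obtain ⟨huk, rfl⟩ := prefixState_eq_some_iff.1 hu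
    obtain ⟨-, rfl⟩ := prefixState_eq_some_iff.1 hv'
    have hlt : rank b n (π u) < rank b n (π v) := by
      have := hne u huv.ne
      omega
    have hle := segm_le_segm_of_rank_lt_rank (hpos u) (hpos v) (hband v u huv.symm) hlt
    have hsucc := segm_le_segm_add_one (Nat.le_succ_of_le (hband u v huv))
    omega

end PrefixState

theorem stmt8_general {V : Type*} [Fintype V] (G : SimpleGraph V) (b n : ℕ)
    (pa : V → V) (φ : V → ℤ)
    (π : V → ℕ) (hbij : Set.BijOn π Set.univ (Set.Icc 1 n))
    (hband : ∀ u v, G.Adj u v → |(π u : ℤ) - (π v : ℤ)| ≤ b)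
    (hcons : ∀ v, π v ∈ SegOf b n pa φ v) :
    (∀ k, k ≤ n → IsState G b n pa φ (prefixState b n π k)) ∧
      (∀ k, k < n → IsExtension G (prefixState b n π k) (prefixState b n π (k + 1))) := by
  have hband' : ∀ u v, G.Adj u v → π u ≤ π v + b := fun u v huv => by
    have := (abs_le.1 (hband u v huv)).2
    omega
  exact ⟨fun k hk => isState_prefixState hbij hband' hcons hk,
    fun k hk => isExtension_prefixState_succ hbij hband' hk⟩

/-- for a `b`-ordering `π` consistent with a segment assignment `φ`,
the partial maps `s k` (defined exactly on the vertices occupying the first `k`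
positions in the color order, assigning to each the base segment of `π v`, i.e. the
base segment `Θ_{segm (π v) − 1}` containing `π v`) are all states, and each `s (k+1)`
is an extension of `s k`. -/
theorem stmt8 {V : Type*} [Fintype V] (G : SimpleGraph V) (b n : ℕ)
    (hb : 1 ≤ b) (hn : 2 ≤ n) (hcard : Fintype.card V = n)
    (u0 : V) (pa : V → V) (htree : IsRootedSpanningTree G u0 pa)
    (φ : V → ℤ)
    (hφinner : ∀ v, v ≠ u0 → ¬ IsLeaf pa v → |φ v - φ (pa v)| = 1)
    (hφleaf : ∀ v, IsLeaf pa v → φ v = φ (pa v) - 1)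
    (π : V → ℕ) (hbij : Set.BijOn π Set.univ (Set.Icc 1 n))
    (hband : ∀ u v, G.Adj u v → |(π u : ℤ) - (π v : ℤ)| ≤ b)
    (hcons : ∀ v, π v ∈ SegOf b n pa φ v)
    (s : ℕ → V → Option ℤ)
    (hs : ∀ k v, s k v =
      if rank b n (π v) < k then some ((segm b (π v) : ℤ) - 1) else none) :
    (∀ k, k ≤ n → IsState G b n pa φ (s k)) ∧
      (∀ k, k < n → IsExtension G (s k) (s (k + 1))) := by
  obtain rfl : s = prefixState b n π := funext₂ hs
  exact stmt8_general G b n pa φ π hbij hband hcons
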